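/- Let P ∈ ℝ^{m×(L+1)p} satisfy P · I_L = [I_m, 0], and define Ã := A − B P O_L and C̃ := −P O_L. Assume the pair (A, C) is observable, i.e., the only ξ ∈ ℝⁿ with C A^k ξ = 0 for all k = 0,…,n−1 is ξ = 0, and let N ≥ n. Then if ξ ∈ V₀ satisfies C̃ Ã^k ξ = 0 for all k = 0,…,N−1, it follows that ξ = 0. Equivalently, letting Õ_{N−1} ∈ ℝ^{Nm×n} be the matrix with block rows C̃ Ã^k, k = 0,…,N−1, one has V₀ ∩ ker(Õ_{N−1}) = {0}. -/

import Mathlib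

open Matrix

/-- Block observability matrix `O_L` with block rows `C A^k`, `k = 0,…,L`. -/
noncomputable def obsMat {n p : ℕ} (A : Matrix (Fin n) (Fin n) ℝ)
    (C : Matrix (Fin p) (Fin n) ℝ) (L : ℕ) :
    Matrix (Fin (L + 1) × Fin p) (Fin n) ℝ :=
  fun kr j => (C * A ^ (kr.1 : ℕ)) kr.2 j

/-- Block invertibility (Toeplitz) matrix `I_L` of the LTI system `(A,B,C,D)`. -/
noncomputable def invMat {n m p : ℕ} (A : Matrix (Fin n) (Fin n) ℝ)
    (B : Matrix (Fin n) (Fin m) ℝ) (C : Matrix (Fin p) (Fin n) ℝ)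
    (D : Matrix (Fin p) (Fin m) ℝ) (L : ℕ) :
    Matrix (Fin (L + 1) × Fin p) (Fin (L + 1) × Fin m) ℝ :=
  fun jr ic =>
    if (jr.1 : ℕ) = (ic.1 : ℕ) then D jr.2 ic.2
    else if (ic.1 : ℕ) < (jr.1 : ℕ) then
      (C * A ^ ((jr.1 : ℕ) - (ic.1 : ℕ) - 1) * B) jr.2 ic.2
    else 0

/-- The block matrix `[I_m, 0] ∈ ℝ^{m × (L+1)m}`. -/
noncomputable def idZero (m L : ℕ) : Matrix (Fin m) (Fin (L + 1) × Fin m) ℝ :=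
  fun r ic => if (ic.1 : ℕ) = 0 ∧ r = ic.2 then 1 else 0

/-- The state sequence of `x_{k+1} = A x_k + B u_k` from initial state `ξ`. -/
noncomputable def stateSeq {n m : ℕ} (A : Matrix (Fin n) (Fin n) ℝ)
    (B : Matrix (Fin n) (Fin m) ℝ) (ξ : Fin n → ℝ) (u : ℕ → Fin m → ℝ) :
    ℕ → Fin n → ℝ
  | 0 => ξ
  | k + 1 => A.mulVec (stateSeq A B ξ u k) + B.mulVec (u k)

/-- The output-nulling subspace `V₀`: states from which some input sequence keeps the
output `y_k = C x_k + D u_k` identically zero. -/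
def outputNulling {n m p : ℕ} (A : Matrix (Fin n) (Fin n) ℝ)
    (B : Matrix (Fin n) (Fin m) ℝ) (C : Matrix (Fin p) (Fin n) ℝ)
    (D : Matrix (Fin p) (Fin m) ℝ) : Set (Fin n → ℝ) :=
  {ξ | ∃ u : ℕ → Fin m → ℝ, ∀ k, C.mulVec (stateSeq A B ξ u k) + D.mulVec (u k) = 0}

/-!
If the outputs at times `0, …, L` vanish, then `O_L ξ + I_L (u_0, …, u_L) = 0`, and applying `P`
recovers the current input: `u_0 = C̃ ξ`. By time invariance an output-nulling trajectory
therefore obeys the feedback law `u_k = C̃ x_k`, hence is the trajectory `x_k = Ã^k ξ` of the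
closed loop `Ã = A + B C̃`. If `C̃ Ã^k ξ` vanishes for `k < N`, so do the inputs, the motion is
free, and `C A^k ξ` is the output, which is zero.
-/

/-- The first `L + 1` terms of a signal as one column vector, indexed by block and then by
position in the block, to match the row and column indices of `obsMat` and `invMat`. -/
def stack {q : ℕ} (L : ℕ) (v : ℕ → Fin q → ℝ) : Fin (L + 1) × Fin q → ℝ :=
  fun kr => v kr.1 kr.2

section Trajectory

variable {n m : ℕ} (A : Matrix (Fin n) (Fin n) ℝ) (B : Matrix (Fin n) (Fin m) ℝ)
  (ξ : Fin n → ℝ) (u : ℕ → Fin m → ℝ)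

theorem stateSeq_succ (k : ℕ) :
    stateSeq A B ξ u (k + 1) = A *ᵥ stateSeq A B ξ u k + B *ᵥ u k :=
  rfl

theorem stateSeq_add (k j : ℕ) :
    stateSeq A B ξ u (k + j) = stateSeq A B (stateSeq A B ξ u k) (fun i => u (k + i)) j := by
  induction j with
  | zero => rfl
  | succ j ih => rw [← add_assoc, stateSeq_succ, stateSeq_succ, ih]

theorem stateSeq_eq_pow_mulVec_add_sum (k : ℕ) :
    stateSeq A B ξ u k =
      A ^ k *ᵥ ξ + ∑ i ∈ Finset.range k, (A ^ (k - i - 1) * B) *ᵥ u i := by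
  induction k with
  | zero => simp [stateSeq]
  | succ k ih =>
    have propagate : ∀ i ∈ Finset.range k,
        A *ᵥ (A ^ (k - i - 1) * B) *ᵥ u i = (A ^ (k + 1 - i - 1) * B) *ᵥ u i := by
      intro i hi
      have hik : i < k := Finset.mem_range.mp hi
      rw [mulVec_mulVec, ← Matrix.mul_assoc, ← pow_succ',
        show k - i - 1 + 1 = k + 1 - i - 1 by omega]
    rw [stateSeq_succ, ih, mulVec_add, mulVec_mulVec, ← pow_succ', mulVec_sum,
      Finset.sum_congr rfl propagate, Finset.sum_range_succ, add_assoc]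
    simp

variable {A B ξ u}

theorem stateSeq_eq_pow_mulVec_of_feedback {F : Matrix (Fin m) (Fin n) ℝ} {k : ℕ}
    (hu : ∀ i < k, u i = F *ᵥ stateSeq A B ξ u i) :
    stateSeq A B ξ u k = (A + B * F) ^ k *ᵥ ξ := by
  induction k with
  | zero => simp [stateSeq]
  | succ k ih =>
    rw [stateSeq_succ, hu k k.lt_succ_self, mulVec_mulVec, ← add_mulVec,
      ih fun i hi => hu i (hi.trans k.lt_succ_self), mulVec_mulVec, ← pow_succ']

theorem stateSeq_eq_pow_mulVec_of_input_eq_zero {k : ℕ} (hu : ∀ i < k, u i = 0) :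
    stateSeq A B ξ u k = A ^ k *ᵥ ξ := by
  simpa using stateSeq_eq_pow_mulVec_of_feedback (F := 0) (by simpa using hu)

end Trajectory

theorem idZero_mulVec_stack {m L : ℕ} (u : ℕ → Fin m → ℝ) :
    idZero m L *ᵥ stack L u = u 0 := by
  ext r
  rw [mulVec, dotProduct, Fintype.sum_prod_type, Fin.sum_univ_succ]
  simp [idZero, stack]

section Output

variable {n m p : ℕ} (A : Matrix (Fin n) (Fin n) ℝ) (B : Matrix (Fin n) (Fin m) ℝ)
  (C : Matrix (Fin p) (Fin n) ℝ) (D : Matrix (Fin p) (Fin m) ℝ)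
  (ξ : Fin n → ℝ) (u : ℕ → Fin m → ℝ) (L : ℕ)

theorem obsMat_mulVec : obsMat A C L *ᵥ ξ = stack L fun k => (C * A ^ k) *ᵥ ξ :=
  rfl

theorem invMat_mulVec_stack :
    invMat A B C D L *ᵥ stack L u = stack L fun k =>
      ∑ i ∈ Finset.range k, (C * A ^ (k - i - 1) * B) *ᵥ u i + D *ᵥ u k := by
  ext ⟨k, r⟩
  let block (i : ℕ) : Matrix (Fin p) (Fin m) ℝ :=
    if (k : ℕ) = i then D else if i < k then C * A ^ (k - i - 1) * B else 0
  have block_lower : ∀ i ∈ Finset.range k, block i = C * A ^ (k - i - 1) * B := by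
    intro i hi
    have hik : i < k := Finset.mem_range.mp hi
    simp only [block, if_neg hik.ne', if_pos hik]
  have block_upper : ∀ i ∉ Finset.range (k + 1), block i = 0 := by
    intro i hi
    have hki : k < i := by simpa using hi
    simp only [block, if_neg hki.ne, if_neg hki.not_gt]
  have row_eq : ∀ (i : Fin (L + 1)) (s : Fin m), invMat A B C D L (k, r) (i, s) = block i r s := by
    intro i s
    simp only [invMat, block]
    split_ifs <;> rfl
  calc (invMat A B C D L *ᵥ stack L u) (k, r)
      = ∑ i : Fin (L + 1), (block i *ᵥ u i) r := by
        simp only [mulVec, dotProduct, Fintype.sum_prod_type, row_eq, stack]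
    _ = ∑ i ∈ Finset.range (L + 1), (block i *ᵥ u i) r :=
        Fin.sum_univ_eq_sum_range (fun i => (block i *ᵥ u i) r) (L + 1)
    _ = ∑ i ∈ Finset.range (k + 1), (block i *ᵥ u i) r := by
        refine (Finset.sum_subset (Finset.range_subset_range.mpr k.isLt) fun i _ hi => ?_).symm
        rw [block_upper i hi, zero_mulVec, Pi.zero_apply]
    _ = (∑ i ∈ Finset.range k, (C * A ^ (k - i - 1) * B) *ᵥ u i + D *ᵥ u k) r := by
        rw [← Finset.sum_apply, Finset.sum_range_succ,
          Finset.sum_congr rfl fun i hi => by rw [block_lower i hi]]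
        simp only [block, if_true]

theorem obsMat_mulVec_add_invMat_mulVec_stack :
    obsMat A C L *ᵥ ξ + invMat A B C D L *ᵥ stack L u =
      stack L fun k => C *ᵥ stateSeq A B ξ u k + D *ᵥ u k := by
  have output_eq (k : ℕ) : C *ᵥ stateSeq A B ξ u k + D *ᵥ u k =
      (C * A ^ k) *ᵥ ξ +
        (∑ i ∈ Finset.range k, (C * A ^ (k - i - 1) * B) *ᵥ u i + D *ᵥ u k) := by
    simp only [stateSeq_eq_pow_mulVec_add_sum, mulVec_add, mulVec_sum, mulVec_mulVec,
      Matrix.mul_assoc, add_assoc]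
  rw [obsMat_mulVec, invMat_mulVec_stack, funext output_eq]
  rfl

variable {A B C D ξ u L}

theorem input_zero_eq_of_output_eq_zero {P : Matrix (Fin m) (Fin (L + 1) × Fin p) ℝ}
    (hP : P * invMat A B C D L = idZero m L)
    (hy : ∀ k ≤ L, C *ᵥ stateSeq A B ξ u k + D *ᵥ u k = 0) :
    u 0 = (-(P * obsMat A C L)) *ᵥ ξ := by
  have stacked_output_eq_zero : obsMat A C L *ᵥ ξ + invMat A B C D L *ᵥ stack L u = 0 := by
    rw [obsMat_mulVec_add_invMat_mulVec_stack]
    ext ⟨k, r⟩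
    exact congrFun (hy k k.is_le) r
  have reconstruct : (P * obsMat A C L) *ᵥ ξ + u 0 = 0 := by
    simpa only [mulVec_add, mulVec_mulVec, hP, idZero_mulVec_stack, mulVec_zero] using
      congrArg (P *ᵥ ·) stacked_output_eq_zero
  rw [neg_mulVec]
  exact eq_neg_of_add_eq_zero_right reconstruct

theorem input_eq_of_output_eq_zero {P : Matrix (Fin m) (Fin (L + 1) × Fin p) ℝ}
    (hP : P * invMat A B C D L = idZero m L) {k : ℕ}
    (hy : ∀ j ≤ L, C *ᵥ stateSeq A B ξ u (k + j) + D *ᵥ u (k + j) = 0) :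
    u k = (-(P * obsMat A C L)) *ᵥ stateSeq A B ξ u k :=
  input_zero_eq_of_output_eq_zero (u := fun j => u (k + j)) hP fun j hj => by
    simpa only [stateSeq_add] using hy j hj

theorem outputNulling_inter_ker_tilde_obs_eq_bot_general
    {P : Matrix (Fin m) (Fin (L + 1) × Fin p) ℝ}
    (hP : P * invMat A B C D L = idZero m L) {N : ℕ}
    (hy : ∀ k < N + L, C *ᵥ stateSeq A B ξ u k + D *ᵥ u k = 0)
    (htilde : ∀ k < N, ((-(P * obsMat A C L)) * (A - B * P * obsMat A C L) ^ k) *ᵥ ξ = 0) :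
    ∀ k < N, (C * A ^ k) *ᵥ ξ = 0 := by
  have feedback : ∀ k < N, u k = (-(P * obsMat A C L)) *ᵥ stateSeq A B ξ u k := fun k hk =>
    input_eq_of_output_eq_zero hP fun j hj => hy (k + j) (by omega)
  have closed_loop : A - B * P * obsMat A C L = A + B * -(P * obsMat A C L) := by
    rw [Matrix.mul_neg, Matrix.mul_assoc, sub_eq_add_neg]
  have input_eq_zero : ∀ k < N, u k = 0 := fun k hk => by
    rw [feedback k hk,
      stateSeq_eq_pow_mulVec_of_feedback fun i hi => feedback i (hi.trans hk),
      mulVec_mulVec, ← closed_loop, htilde k hk]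
  intro k hk
  calc (C * A ^ k) *ᵥ ξ
      = C *ᵥ stateSeq A B ξ u k + D *ᵥ u k := by
        rw [stateSeq_eq_pow_mulVec_of_input_eq_zero fun i hi => input_eq_zero i (hi.trans hk),
          input_eq_zero k hk, mulVec_mulVec, mulVec_zero, add_zero]
    _ = 0 := hy k (by omega)

end Output

/-- If `(A, C)` is observable, `N ≥ n`, `P I_L = [I_m, 0]`, `Ã := A - B P O_L`,
`C̃ := -P O_L`, then the only `ξ ∈ V₀` with `C̃ Ã^k ξ = 0` for `k = 0,…,N-1` is `ξ = 0`;
i.e. `V₀ ∩ ker Õ_{N-1} = {0}`. -/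
theorem outputNulling_inter_ker_tilde_obs_eq_bot {n m p L N : ℕ}
    (A : Matrix (Fin n) (Fin n) ℝ) (B : Matrix (Fin n) (Fin m) ℝ)
    (C : Matrix (Fin p) (Fin n) ℝ) (D : Matrix (Fin p) (Fin m) ℝ)
    (P : Matrix (Fin m) (Fin (L + 1) × Fin p) ℝ)
    (hP : P * invMat A B C D L = idZero m L)
    (hobs : ∀ ξ : Fin n → ℝ, (∀ k < n, (C * A ^ k).mulVec ξ = 0) → ξ = 0)
    (hN : n ≤ N) :
    ∀ ξ ∈ outputNulling A B C D,
      (∀ k < N, ((-(P * obsMat A C L)) * (A - B * P * obsMat A C L) ^ k).mulVec ξ = 0) →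
      ξ = 0 := by
  rintro ξ ⟨u, hy⟩ htilde
  exact hobs ξ fun k hk => outputNulling_inter_ker_tilde_obs_eq_bot_general hP
    (fun i _ => hy i) htilde k (hk.trans_le hN)
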